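/- arXiv:1808.04791 — 3 statements merged into one kernel-verified Lean document; each statement's English description precedes it below -/
import Mathlib

section
/- (Onsager–Casimir reciprocity relations.) For all α, β : Fin χ, the linear response coefficients satisfy D[(α); (β)] f = D[(β); (α)] g; that is, Q_{α,β}(B) = Q_{β,α}(−B). -/
/-- Partial derivative of `F (λ, A)` with respect to the counting parameter `λ_i`. -/
noncomputable def pderivLam {χ : ℕ} (i : Fin χ)
    (F : (Fin χ → ℝ) → (Fin χ → ℝ) → ℝ) : (Fin χ → ℝ) → (Fin χ → ℝ) → ℝ :=
  fun l a => fderiv ℝ (fun l' => F l' a) l (Pi.single i 1)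

/-- Partial derivative of `F (λ, A)` with respect to the affinity `A_i`. -/
noncomputable def pderivAff {χ : ℕ} (i : Fin χ)
    (F : (Fin χ → ℝ) → (Fin χ → ℝ) → ℝ) : (Fin χ → ℝ) → (Fin χ → ℝ) → ℝ :=
  fun l a => fderiv ℝ (fun a' => F l a') a (Pi.single i 1)

/-- Mixed partial derivative `D[α; β] F`: derivatives with respect to the counting
parameters `λ_{α₁}, …, λ_{α_m}` and the affinities `A_{β₁}, …, A_{β_n}`, evaluated at
`(λ, A) = (0, 0)`. -/
noncomputable def Dmix {χ : ℕ} (α β : List (Fin χ))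
    (F : (Fin χ → ℝ) → (Fin χ → ℝ) → ℝ) : ℝ :=
  (List.foldr pderivLam (List.foldr pderivAff F β) α) 0 0

/-!
In the coordinates `(λ, A)` the fluctuation relation says `f = g ∘ L` with `L (λ, A) = (A - λ, A)`.
This linear map sends the diagonal vector `(u, u)` to `(0, u)` and vice versa, so by the chain rule
the second derivatives at the origin satisfy `D²f ((u, u), (0, v)) = D²g ((0, u), (v, v))`.
Expanding both diagonal vectors bilinearly leaves the two mixed derivatives to be compared, up to
`D²f ((0, u), (0, v))` and `D²g ((0, u), (0, v))`, which agree because `f` and `g` have the same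
restriction to `λ = 0`.
-/

section SecondDerivative

open scoped ContDiff Topology

variable {𝕜 E E' F : Type*} [NontriviallyNormedField 𝕜]
  [NormedAddCommGroup E] [NormedSpace 𝕜 E] [NormedAddCommGroup E'] [NormedSpace 𝕜 E']
  [NormedAddCommGroup F] [NormedSpace 𝕜 F]

theorem eventually_differentiableAt_of_contDiffAt {f : E → F} {x : E} {n : ℕ∞ω}
    (hf : ContDiffAt 𝕜 n f x) (hn : n ≠ 0) : ∀ᶠ y in 𝓝 x, DifferentiableAt 𝕜 f y :=
  ((hf.of_le (ENat.one_le_iff_ne_zero_withTop.mpr hn)).eventually (by simp)).mono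
    fun _ hy => hy.differentiableAt one_ne_zero

theorem differentiableAt_fderiv_of_contDiffAt_two {f : E → F} {x : E}
    (hf : ContDiffAt 𝕜 2 f x) : DifferentiableAt 𝕜 (fderiv 𝕜 f) x :=
  (hf.fderiv_right (m := 1) one_add_one_eq_two.le).differentiableAt one_ne_zero

theorem fderiv_fderiv_comp_clm {f : E → F} (L : E' →L[𝕜] E) {x : E'}
    (hf : ContDiffAt 𝕜 2 f (L x)) (u v : E') :
    fderiv 𝕜 (fderiv 𝕜 (f ∘ L)) x u v = fderiv 𝕜 (fderiv 𝕜 f) (L x) (L u) (L v) := by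
  have hf_near : ∀ᶠ y in 𝓝 x, DifferentiableAt 𝕜 f (L y) :=
    L.continuous.continuousAt.eventually
      (eventually_differentiableAt_of_contDiffAt hf two_ne_zero)
  have hfderiv : fderiv 𝕜 (f ∘ L) =ᶠ[𝓝 x] fun y => (fderiv 𝕜 f (L y)).comp L :=
    hf_near.mono fun y hy => (hy.hasFDerivAt.comp y L.hasFDerivAt).fderiv
  have hcomp : HasFDerivAt (fun y => fderiv 𝕜 f (L y))
      ((fderiv 𝕜 (fderiv 𝕜 f) (L x)).comp L) x :=
    (differentiableAt_fderiv_of_contDiffAt_two hf).hasFDerivAt.comp x L.hasFDerivAt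
  rw [hfderiv.fderiv_eq, (hcomp.clm_comp (hasFDerivAt_const L x)).fderiv]
  simp

theorem fderiv_fderiv_partial {f : E × E' → F} {x : E} {y : E'}
    (hf : ContDiffAt 𝕜 2 f (x, y)) (u : E) (v : E') :
    fderiv 𝕜 (fun x' => fderiv 𝕜 (fun y' => f (x', y')) y v) x u =
      fderiv 𝕜 (fderiv 𝕜 f) (x, y) (u, 0) (0, v) := by
  have hf_near : ∀ᶠ x' in 𝓝 x, DifferentiableAt 𝕜 f (x', y) :=
    (Continuous.prodMk_left y).continuousAt.eventually
      (eventually_differentiableAt_of_contDiffAt hf two_ne_zero)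
  have hpartial : (fun x' => fderiv 𝕜 (fun y' => f (x', y')) y v) =ᶠ[𝓝 x]
      fun x' => fderiv 𝕜 f (x', y) (0, v) :=
    hf_near.mono fun x' hx' =>
      congrArg (· v) (hx'.hasFDerivAt.comp y (hasFDerivAt_prodMk_right x' y)).fderiv
  have hcomp : HasFDerivAt (fun x' => fderiv 𝕜 f (x', y))
      ((fderiv 𝕜 (fderiv 𝕜 f) (x, y)).comp (ContinuousLinearMap.inl 𝕜 E E')) x :=
    (differentiableAt_fderiv_of_contDiffAt_two hf).hasFDerivAt.comp x
      (hasFDerivAt_prodMk_left x y)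
  rw [hpartial.fderiv_eq, (hcomp.clm_apply (hasFDerivAt_const ((0 : E), v) x)).fderiv]
  simp

end SecondDerivative

theorem Dmix_singleton_singleton {χ : ℕ} {f : (Fin χ → ℝ) → (Fin χ → ℝ) → ℝ}
    (hf : ContDiffAt ℝ 2 (Function.uncurry f) 0) (i j : Fin χ) :
    Dmix [i] [j] f = fderiv ℝ (fderiv ℝ (Function.uncurry f)) 0
      (Pi.single i 1, 0) (0, Pi.single j 1) :=
  fderiv_fderiv_partial hf (Pi.single i 1) (Pi.single j 1)

section Fluctuation

open scoped ContDiff Topology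

/-- The change of variables `(λ, A) ↦ (A - λ, A)` of the fluctuation relation
`Q(λ, A; B) = Q(A - λ, A; -B)`, as a continuous linear map, so that the relation reads
`f = g ∘ fluctuationMap`. -/
def fluctuationMap (𝕜 E : Type*) [NontriviallyNormedField 𝕜] [NormedAddCommGroup E]
    [NormedSpace 𝕜 E] : E × E →L[𝕜] E × E :=
  (ContinuousLinearMap.snd 𝕜 E E - ContinuousLinearMap.fst 𝕜 E E).prod
    (ContinuousLinearMap.snd 𝕜 E E)

@[simp]
theorem fluctuationMap_apply {𝕜 E : Type*} [NontriviallyNormedField 𝕜] [NormedAddCommGroup E]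
    [NormedSpace 𝕜 E] (z : E × E) : fluctuationMap 𝕜 E z = (z.2 - z.1, z.2) :=
  rfl

theorem contDiffAt_zero_of_fluctuation {𝕜 E F : Type*} [NontriviallyNormedField 𝕜]
    [NormedAddCommGroup E] [NormedSpace 𝕜 E] [NormedAddCommGroup F] [NormedSpace 𝕜 F]
    {n : ℕ∞ω} {f g : E × E → F} (hg : ContDiffAt 𝕜 n g 0)
    (hfg : f =ᶠ[𝓝 0] g ∘ fluctuationMap 𝕜 E) : ContDiffAt 𝕜 n f 0 := by
  rw [← map_zero (fluctuationMap 𝕜 E)] at hg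
  exact (hg.comp 0 (fluctuationMap 𝕜 E).contDiff.contDiffAt).congr_of_eventuallyEq hfg

theorem fderiv_fderiv_mixed_eq_of_fluctuation {𝕜 E F : Type*} [RCLike 𝕜]
    [NormedAddCommGroup E] [NormedSpace 𝕜 E] [NormedAddCommGroup F] [NormedSpace 𝕜 F]
    {f g : E × E → F} (hg : ContDiffAt 𝕜 2 g 0) (hfg : f =ᶠ[𝓝 0] g ∘ fluctuationMap 𝕜 E)
    (hzero : ∀ᶠ A in 𝓝 0, f (0, A) = g (0, A)) (u v : E) :
    fderiv 𝕜 (fderiv 𝕜 f) 0 (u, 0) (0, v) = fderiv 𝕜 (fderiv 𝕜 g) 0 (v, 0) (0, u) := by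
  let ι := ContinuousLinearMap.inr 𝕜 E E
  have hf : ContDiffAt 𝕜 2 f 0 := contDiffAt_zero_of_fluctuation hg hfg
  have hdiag : fderiv 𝕜 (fderiv 𝕜 f) 0 (u, u) (0, v) =
      fderiv 𝕜 (fderiv 𝕜 g) 0 (0, u) (v, v) := by
    rw [hfg.fderiv.fderiv_eq, fderiv_fderiv_comp_clm _ (by rwa [map_zero]), map_zero]
    simp
  have hι : f ∘ ι =ᶠ[𝓝 0] g ∘ ι := hzero
  have haff : fderiv 𝕜 (fderiv 𝕜 f) 0 (0, u) (0, v) =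
      fderiv 𝕜 (fderiv 𝕜 g) 0 (0, u) (0, v) :=
    calc fderiv 𝕜 (fderiv 𝕜 f) 0 (0, u) (0, v)
      _ = fderiv 𝕜 (fderiv 𝕜 (f ∘ ι)) 0 u v := (fderiv_fderiv_comp_clm ι hf u v).symm
      _ = fderiv 𝕜 (fderiv 𝕜 (g ∘ ι)) 0 u v := by rw [hι.fderiv.fderiv_eq]
      _ = fderiv 𝕜 (fderiv 𝕜 g) 0 (0, u) (0, v) := fderiv_fderiv_comp_clm ι hg u v
  have hsplit (w : E) : (w, w) = (w, 0) + (0, w) := by simp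
  have hsymm : IsSymmSndFDerivAt 𝕜 g 0 := hg.isSymmSndFDerivAt (by simp)
  rw [hsplit u, hsplit v, map_add, map_add, add_apply, haff] at hdiag
  exact (add_right_cancel hdiag).trans (hsymm (0, u) (v, 0))

theorem onsager_casimir_general {χ : ℕ} {f g : (Fin χ → ℝ) → (Fin χ → ℝ) → ℝ}
    (hg : ContDiffAt ℝ 2 (Function.uncurry g) 0)
    (hFR : ∀ᶠ z in 𝓝 (0 : (Fin χ → ℝ) × (Fin χ → ℝ)), f z.1 z.2 = g (z.2 - z.1) z.2)
    (hzero : ∀ᶠ A in 𝓝 (0 : Fin χ → ℝ), f 0 A = g 0 A) (α β : Fin χ) :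
    Dmix [α] [β] f = Dmix [β] [α] g := by
  have hf : ContDiffAt ℝ 2 (Function.uncurry f) 0 := contDiffAt_zero_of_fluctuation hg hFR
  rw [Dmix_singleton_singleton hf, Dmix_singleton_singleton hg]
  exact fderiv_fderiv_mixed_eq_of_fluctuation hg hFR hzero _ _

end Fluctuation

/-- Onsager–Casimir reciprocity relations: `Q_{α,β}(B) = Q_{β,α}(−B)`. -/
theorem onsager_casimir {χ : ℕ} (hχ : 1 ≤ χ)
    (f g : (Fin χ → ℝ) → (Fin χ → ℝ) → ℝ)
    (hf : ContDiff ℝ (⊤ : ℕ∞) (Function.uncurry f))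
    (hg : ContDiff ℝ (⊤ : ℕ∞) (Function.uncurry g))
    (hFR : ∀ l A : Fin χ → ℝ, f l A = g (A - l) A)
    (hfnorm : ∀ A : Fin χ → ℝ, f 0 A = 0)
    (hgnorm : ∀ A : Fin χ → ℝ, g 0 A = 0)
    (α β : Fin χ) :
    Dmix [α] [β] f = Dmix [β] [α] g :=
  onsager_casimir_general (contDiff_infty.mp hg 2).contDiffAt (.of_forall fun z => hFR z.1 z.2)
    (.of_forall fun A => (hfnorm A).trans (hgnorm A).symm) α β
end

section
/- For all α, β, γ : Fin χ, the equilibrium third cumulant is fully determined by the second response coefficients: D[(α, β, γ); ∅] f = ( D[(α); (β, γ)] f + D[(β); (γ, α)] f + D[(γ); (α, β)] f ) − ( D[(α); (β, γ)] g + D[(β); (γ, α)] g + D[(γ); (α, β)] g ). -/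
/-!
The fluctuation relation says that `f = g ∘ T` for the linear map `T (λ, A) = (A - λ, A)`, which
sends a `λ`-direction `x = (u, 0)` to `-x` and the matching `A`-direction `y = (0, u)` to `x + y`.
Hence all third derivatives of `f` and `g` at the origin are values of the single symmetric
trilinear form `B = D³g(0)`. As `g (A, A) = f (0, A) = g (0, A)`, this form satisfies
`B (x₀ + y₀, x₁ + y₁, x₂ + y₂) = B (y₀, y₁, y₂)`, and expanding both sides of the claim reduces
it to twice this relation.
-/

section Multilinear

variable {R V W : Type*} [Ring R] [AddCommGroup V] [Module R V] [AddCommGroup W] [Module R W]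

theorem map_neg_three_eq_of_map_add_eq (B : MultilinearMap R (fun _ : Fin 3 ↦ V) W)
    {x₀ x₁ x₂ y₀ y₁ y₂ : V} (hB : B ![x₀ + y₀, x₁ + y₁, x₂ + y₂] = B ![y₀, y₁, y₂]) :
    B ![-x₀, -x₁, -x₂] =
      (B ![-x₀, x₁ + y₁, x₂ + y₂] + B ![x₀ + y₀, -x₁, x₂ + y₂] +
        B ![x₀ + y₀, x₁ + y₁, -x₂]) -
      (B ![x₀, y₁, y₂] + B ![y₀, x₁, y₂] + B ![y₀, y₁, x₂]) := by
  have update₀ (u v w x : V) : Function.update ![u, v, w] 0 x = ![x, v, w] := by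
    ext i; fin_cases i <;> rfl
  have update₁ (u v w x : V) : Function.update ![u, v, w] 1 x = ![u, x, w] := by
    ext i; fin_cases i <;> rfl
  have update₂ (u v w x : V) : Function.update ![u, v, w] 2 x = ![u, v, x] := by
    ext i; fin_cases i <;> rfl
  have add₀ (u u' v w : V) : B ![u + u', v, w] = B ![u, v, w] + B ![u', v, w] := by
    simpa only [update₀] using B.map_update_add ![0, v, w] 0 u u'
  have add₁ (u v v' w : V) : B ![u, v + v', w] = B ![u, v, w] + B ![u, v', w] := by
    simpa only [update₁] using B.map_update_add ![u, 0, w] 1 v v'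
  have add₂ (u v w w' : V) : B ![u, v, w + w'] = B ![u, v, w] + B ![u, v, w'] := by
    simpa only [update₂] using B.map_update_add ![u, v, 0] 2 w w'
  have neg₀ (u v w : V) : B ![-u, v, w] = -B ![u, v, w] := by
    simpa only [update₀] using B.map_update_neg ![0, v, w] 0 u
  have neg₁ (u v w : V) : B ![u, -v, w] = -B ![u, v, w] := by
    simpa only [update₁] using B.map_update_neg ![u, 0, w] 1 v
  have neg₂ (u v w : V) : B ![u, v, -w] = -B ![u, v, w] := by
    simpa only [update₂] using B.map_update_neg ![u, v, 0] 2 w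
  simp only [add₀, add₁, add₂, neg₀, neg₁, neg₂] at hB ⊢
  linear_combination (norm := module) (2 : ℤ) • hB

end Multilinear

section IteratedFDeriv

variable {𝕜 E E' F G : Type*} [NontriviallyNormedField 𝕜]
  [NormedAddCommGroup E] [NormedSpace 𝕜 E] [NormedAddCommGroup E'] [NormedSpace 𝕜 E']
  [NormedAddCommGroup F] [NormedSpace 𝕜 F] [NormedAddCommGroup G] [NormedSpace 𝕜 G]

theorem contDiff_iteratedFDeriv_apply {f : E → F} {m : WithTop ℕ∞} {n : ℕ}
    (hf : ContDiff 𝕜 (m + n) f) (v : Fin n → E) :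
    ContDiff 𝕜 m (fun x ↦ iteratedFDeriv 𝕜 n f x v) :=
  (ContinuousMultilinearMap.apply 𝕜 _ F v).contDiff.comp (hf.iteratedFDeriv_right le_rfl)

theorem iteratedFDeriv_get_cons {f : E → F} {L : List E} (hf : ContDiff 𝕜 (L.length + 1) f)
    (u x : E) :
    iteratedFDeriv 𝕜 (u :: L).length f x (u :: L).get =
      fderiv 𝕜 (fun y ↦ iteratedFDeriv 𝕜 L.length f y L.get) x u := by
  have hd : DifferentiableAt 𝕜 (iteratedFDeriv 𝕜 L.length f) x :=
    hf.differentiable_iteratedFDeriv (by exact_mod_cast L.length.lt_succ_self) x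
  rw [fderiv_continuousMultilinear_apply_const_apply hd]
  exact iteratedFDeriv_succ_apply_left _

theorem fderiv_fderiv_apply_comm [IsRCLikeNormedField 𝕜] {f : E → F} (hf : ContDiff 𝕜 2 f)
    (x u v : E) :
    fderiv 𝕜 (fun y ↦ fderiv 𝕜 f y v) x u = fderiv 𝕜 (fun y ↦ fderiv 𝕜 f y u) x v := by
  have hd : DifferentiableAt 𝕜 (fderiv 𝕜 f) x :=
    (hf.fderiv_right one_add_one_eq_two.le).differentiable one_ne_zero x
  have hsymm : IsSymmSndFDerivAt 𝕜 f x :=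
    hf.contDiffAt.isSymmSndFDerivAt minSmoothness_of_isRCLikeNormedField.le
  simpa [fderiv_clm_apply hd] using hsymm.eq u v

-- Mathlib's `ContDiffAt.iteratedFDeriv_comp_perm` requires `f` to be analytic.
theorem iteratedFDeriv_get_eq_of_perm [IsRCLikeNormedField 𝕜] {f : E → F} {L L' : List E}
    (h : L.Perm L') (hf : ContDiff 𝕜 L.length f) (x : E) :
    iteratedFDeriv 𝕜 L.length f x L.get = iteratedFDeriv 𝕜 L'.length f x L'.get := by
  induction h generalizing x with
  | nil => rfl
  | @cons u L L' h ih =>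
    have hf' : ContDiff 𝕜 (L.length + 1) f := by simpa using hf
    rw [iteratedFDeriv_get_cons hf', iteratedFDeriv_get_cons (h.length_eq ▸ hf')]
    simp_rw [ih (hf'.of_le (by exact_mod_cast L.length.le_succ))]
  | swap u v L =>
    have hf₁ : ContDiff 𝕜 (L.length + 1) f :=
      hf.of_le (by exact_mod_cast Nat.le_succ (L.length + 1))
    have hf₂ : ContDiff 𝕜 (2 + L.length) f :=
      hf.of_le (by exact_mod_cast (Nat.add_comm 2 L.length).le)
    rw [iteratedFDeriv_get_cons (L := u :: L) hf, iteratedFDeriv_get_cons (L := v :: L) hf]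
    simp_rw [iteratedFDeriv_get_cons hf₁]
    exact fderiv_fderiv_apply_comm (contDiff_iteratedFDeriv_apply hf₂ L.get) x v u
  | trans h _ ih ih' => exact (ih hf x).trans (ih' (h.length_eq ▸ hf) x)

theorem iteratedFDeriv_apply_comp_eq_of_comp_eq {f : E → F} {n : ℕ} (hf : ContDiff 𝕜 n f)
    {S T : G →L[𝕜] E} (h : f ∘ S = f ∘ T) (x : G) (v : Fin n → G) :
    iteratedFDeriv 𝕜 n f (S x) (S ∘ v) = iteratedFDeriv 𝕜 n f (T x) (T ∘ v) := by
  have hST := T.iteratedFDeriv_comp_right hf x le_rfl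
  rw [← h, S.iteratedFDeriv_comp_right hf x le_rfl] at hST
  exact congrArg (· v) hST

theorem iteratedFDeriv_three_of_fluctuation_relation {f g : E × E → F} (hg : ContDiff 𝕜 3 g)
    (hfg : ∀ l A, f (l, A) = g (A - l, A)) (h₀ : ∀ A, f (0, A) = g (0, A)) (u v w : E) :
    iteratedFDeriv 𝕜 3 f 0 ![(u, 0), (v, 0), (w, 0)] =
      (iteratedFDeriv 𝕜 3 f 0 ![(u, 0), (0, v), (0, w)] +
        iteratedFDeriv 𝕜 3 f 0 ![(0, u), (v, 0), (0, w)] +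
        iteratedFDeriv 𝕜 3 f 0 ![(0, u), (0, v), (w, 0)]) -
      (iteratedFDeriv 𝕜 3 g 0 ![(u, 0), (0, v), (0, w)] +
        iteratedFDeriv 𝕜 3 g 0 ![(0, u), (v, 0), (0, w)] +
        iteratedFDeriv 𝕜 3 g 0 ![(0, u), (0, v), (w, 0)]) := by
  let T : E × E →L[𝕜] E × E :=
    (ContinuousLinearMap.snd 𝕜 E E - ContinuousLinearMap.fst 𝕜 E E).prod
      (ContinuousLinearMap.snd 𝕜 E E)
  let diag : E →L[𝕜] E × E := (ContinuousLinearMap.id 𝕜 E).prod (ContinuousLinearMap.id 𝕜 E)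
  have hfT : f = g ∘ T := funext fun p ↦ hfg p.1 p.2
  have hDf (p q r : E × E) :
      iteratedFDeriv 𝕜 3 f 0 ![p, q, r] = iteratedFDeriv 𝕜 3 g 0 ![T p, T q, T r] := by
    rw [hfT, T.iteratedFDeriv_comp_right hg 0 le_rfl, map_zero]
    exact congrArg (iteratedFDeriv 𝕜 3 g 0) (FinVec.map_eq T ![p, q, r]).symm
  have hTl (a : E) : T (a, 0) = -(a, 0) := by simp [T]
  have hTA (a : E) : T (0, a) = (a, 0) + (0, a) := by simp [T]
  have hdiag : g ∘ diag = g ∘ ContinuousLinearMap.inr 𝕜 E E := by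
    ext A
    simpa [diag] using (hfg 0 A).symm.trans (h₀ A)
  have hB : iteratedFDeriv 𝕜 3 g 0 ![diag u, diag v, diag w] =
      iteratedFDeriv 𝕜 3 g 0 ![(0, u), (0, v), (0, w)] := by
    have h := iteratedFDeriv_apply_comp_eq_of_comp_eq hg hdiag 0 ![u, v, w]
    rwa [map_zero, map_zero, ← FinVec.map_eq, ← FinVec.map_eq] at h
  simp only [hDf, hTl, hTA]
  apply map_neg_three_eq_of_map_add_eq (iteratedFDeriv 𝕜 3 g 0).toMultilinearMap
  simpa [diag] using hB

theorem uncurry_foldr_eq_iteratedFDeriv {ι : Type*} {D : ι → (E → E' → F) → E → E' → F}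
    {d : ι → E × E'}
    (hD : ∀ i H, Differentiable 𝕜 (Function.uncurry H) →
      Function.uncurry (D i H) = fun p ↦ fderiv 𝕜 (Function.uncurry H) p (d i))
    {f : E × E' → F} {H : E → E' → F} {L : List (E × E')}
    (hH : Function.uncurry H = fun p ↦ iteratedFDeriv 𝕜 L.length f p L.get)
    (l : List ι) (hf : ContDiff 𝕜 (l.map d ++ L).length f) :
    Function.uncurry (l.foldr D H) =
      fun p ↦ iteratedFDeriv 𝕜 (l.map d ++ L).length f p (l.map d ++ L).get := by
  induction l with
  | nil => exact hH
  | cons i l ih =>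
    have hf' : ContDiff 𝕜 ((l.map d ++ L).length + 1) f := by simpa using hf
    have ih := ih (hf'.of_le (by exact_mod_cast Nat.le_succ _))
    have hd : Differentiable 𝕜 (Function.uncurry (l.foldr D H)) := by
      rw [ih]
      exact (contDiff_iteratedFDeriv_apply (add_comm _ (1 : WithTop ℕ∞) ▸ hf') _).differentiable
        one_ne_zero
    ext p
    rw [List.foldr_cons, hD i _ hd, ih]
    exact (iteratedFDeriv_get_cons hf' (d i) p).symm

end IteratedFDeriv

section MixedDerivatives

variable {χ : ℕ}

/-- The direction of the partial derivative with respect to the counting parameter `λ_i`, as a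
vector of the space of pairs `(λ, A)`. -/
abbrev lamDir (i : Fin χ) : (Fin χ → ℝ) × (Fin χ → ℝ) := (Pi.single i 1, 0)

/-- The direction of the partial derivative with respect to the affinity `A_i`, as a vector of
the space of pairs `(λ, A)`. -/
abbrev affDir (i : Fin χ) : (Fin χ → ℝ) × (Fin χ → ℝ) := (0, Pi.single i 1)

variable {F : (Fin χ → ℝ) → (Fin χ → ℝ) → ℝ}

theorem uncurry_pderivLam (i : Fin χ) (hF : Differentiable ℝ (Function.uncurry F)) :
    Function.uncurry (pderivLam i F) =
      fun p ↦ fderiv ℝ (Function.uncurry F) p (lamDir i) := by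
  ext ⟨l, a⟩
  have h := (hF (l, a)).hasFDerivAt.comp l (hasFDerivAt_prodMk_left (𝕜 := ℝ) l a)
  exact congrArg (· (Pi.single i 1)) h.fderiv

theorem uncurry_pderivAff (i : Fin χ) (hF : Differentiable ℝ (Function.uncurry F)) :
    Function.uncurry (pderivAff i F) =
      fun p ↦ fderiv ℝ (Function.uncurry F) p (affDir i) := by
  ext ⟨l, a⟩
  have h := (hF (l, a)).hasFDerivAt.comp a (hasFDerivAt_prodMk_right (𝕜 := ℝ) l a)
  exact congrArg (· (Pi.single i 1)) h.fderiv

theorem Dmix_eq_iteratedFDeriv (α β : List (Fin χ))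
    (hF : ContDiff ℝ (α.map lamDir ++ β.map affDir).length (Function.uncurry F)) :
    Dmix α β F = iteratedFDeriv ℝ (α.map lamDir ++ β.map affDir).length (Function.uncurry F) 0
      (α.map lamDir ++ β.map affDir).get := by
  have hβ : ContDiff ℝ (β.map affDir ++ []).length (Function.uncurry F) :=
    hF.of_le (by simp)
  have hAff := uncurry_foldr_eq_iteratedFDeriv (L := []) (fun i _ ↦ uncurry_pderivAff i) rfl β hβ
  rw [List.append_nil] at hAff
  exact congrFun (uncurry_foldr_eq_iteratedFDeriv (fun i _ ↦ uncurry_pderivLam i) hAff α hF) 0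

theorem Dmix_eq_iteratedFDeriv_three {α β : List (Fin χ)} {u v w : (Fin χ → ℝ) × (Fin χ → ℝ)}
    (h : (α.map lamDir ++ β.map affDir).Perm [u, v, w])
    (hF : ContDiff ℝ 3 (Function.uncurry F)) :
    Dmix α β F = iteratedFDeriv ℝ 3 (Function.uncurry F) 0 ![u, v, w] := by
  have hF' : ContDiff ℝ (α.map lamDir ++ β.map affDir).length (Function.uncurry F) := by
    rw [h.length_eq]
    exact hF
  rw [Dmix_eq_iteratedFDeriv α β hF', iteratedFDeriv_get_eq_of_perm h hF']
  refine congrArg (iteratedFDeriv ℝ 3 (Function.uncurry F) 0) ?_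
  ext1 i; fin_cases i <;> rfl

end MixedDerivatives

theorem third_cumulant_from_second_response_coefficients_general {χ : ℕ}
    (f g : (Fin χ → ℝ) → (Fin χ → ℝ) → ℝ)
    (hg : ContDiff ℝ 3 (Function.uncurry g))
    (hFR : ∀ l A : Fin χ → ℝ, f l A = g (A - l) A)
    (hnorm : ∀ A : Fin χ → ℝ, f 0 A = g 0 A)
    (α β γ : Fin χ) :
    Dmix [α, β, γ] [] f =
      (Dmix [α] [β, γ] f + Dmix [β] [γ, α] f + Dmix [γ] [α, β] f) -
        (Dmix [α] [β, γ] g + Dmix [β] [γ, α] g + Dmix [γ] [α, β] g) := by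
  have hf : ContDiff ℝ 3 (Function.uncurry f) := by
    rw [show Function.uncurry f = Function.uncurry g ∘ fun p ↦ (p.2 - p.1, p.2) from
      funext fun p ↦ hFR p.1 p.2]
    fun_prop
  have hDβ {F} (hF : ContDiff ℝ 3 (Function.uncurry F)) : Dmix [β] [γ, α] F =
      iteratedFDeriv ℝ 3 (Function.uncurry F) 0 ![affDir α, lamDir β, affDir γ] :=
    Dmix_eq_iteratedFDeriv_three (List.perm_append_comm (l₁ := [lamDir β, affDir γ])) hF
  have hDγ {F} (hF : ContDiff ℝ 3 (Function.uncurry F)) : Dmix [γ] [α, β] F =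
      iteratedFDeriv ℝ 3 (Function.uncurry F) 0 ![affDir α, affDir β, lamDir γ] :=
    Dmix_eq_iteratedFDeriv_three (List.perm_append_comm (l₁ := [lamDir γ])) hF
  rw [hDβ hf, hDγ hf, hDβ hg, hDγ hg, Dmix_eq_iteratedFDeriv_three (.refl _) hf,
    Dmix_eq_iteratedFDeriv_three (.refl _) hf, Dmix_eq_iteratedFDeriv_three (.refl _) hg]
  exact iteratedFDeriv_three_of_fluctuation_relation hg hFR hnorm _ _ _

/-- The equilibrium third cumulant is fully determined by the second response
coefficients. -/
theorem third_cumulant_from_second_response_coefficients {χ : ℕ} (hχ : 1 ≤ χ)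
    (f g : (Fin χ → ℝ) → (Fin χ → ℝ) → ℝ)
    (hf : ContDiff ℝ (⊤ : ℕ∞) (Function.uncurry f))
    (hg : ContDiff ℝ (⊤ : ℕ∞) (Function.uncurry g))
    (hFR : ∀ l A : Fin χ → ℝ, f l A = g (A - l) A)
    (hfnorm : ∀ A : Fin χ → ℝ, f 0 A = 0)
    (hgnorm : ∀ A : Fin χ → ℝ, g 0 A = 0)
    (α β γ : Fin χ) :
    Dmix [α, β, γ] [] f =
      (Dmix [α] [β, γ] f + Dmix [β] [γ, α] f + Dmix [γ] [α, β] f) -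
        (Dmix [α] [β, γ] g + Dmix [β] [γ, α] g + Dmix [γ] [α, β] g) := by
  exact third_cumulant_from_second_response_coefficients_general f g
    (contDiff_infty.1 hg 3) hFR (fun A ↦ (hfnorm A).trans (hgnorm A).symm) α β γ
end

section
/- For all α, β, γ, δ : Fin χ, the first response of the third cumulants satisfies D[(α, β, γ); (δ)] f + D[(α, β, γ); (δ)] g = − D[(α, β, γ, δ); ∅] f; that is, the sum of the first response of the third cumulant at B and at −B equals minus the equilibrium fourth cumulant. -/
/-!
Since `λ ↦ A - λ` is an involution, the fluctuation relation also expresses `g` through `f`, namely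
`g (λ, A) = f (A - λ, A)`. By the chain rule `∂_{A_δ} g` is then `∂_{λ_δ} f + ∂_{A_δ} f` evaluated
at `(A - λ, A)`, and each further `λ`-derivative only contributes a sign. At the origin, which
`(λ, A) ↦ (A - λ, A)` fixes, this gives
`D[α; δ] g = (-1)^|α| (D[α, δ; ∅] f + D[α; δ] f)`; the theorem is the case `|α| = 3`.
-/

section

variable {χ : ℕ} {F G : (Fin χ → ℝ) → (Fin χ → ℝ) → ℝ} {n : WithTop ℕ∞}

theorem pderivLam_eq_fderiv_uncurry (hF : Differentiable ℝ (Function.uncurry F)) (i : Fin χ)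
    (l a : Fin χ → ℝ) :
    pderivLam i F l a = fderiv ℝ (Function.uncurry F) (l, a) (Pi.single i 1, 0) := by
  have hslice := (hF (l, a)).hasFDerivAt.comp (f := (·, a)) l (hasFDerivAt_prodMk_left l a)
  exact congr($(hslice.fderiv) (Pi.single i 1))

theorem pderivAff_eq_fderiv_uncurry (hF : Differentiable ℝ (Function.uncurry F)) (i : Fin χ)
    (l a : Fin χ → ℝ) :
    pderivAff i F l a = fderiv ℝ (Function.uncurry F) (l, a) (0, Pi.single i 1) := by
  have hslice := (hF (l, a)).hasFDerivAt.comp a (hasFDerivAt_prodMk_right l a)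
  exact congr($(hslice.fderiv) (Pi.single i 1))

theorem contDiff_uncurry_pderivLam (hF : ContDiff ℝ (n + 1) (Function.uncurry F)) (i : Fin χ) :
    ContDiff ℝ n (Function.uncurry (pderivLam i F)) := by
  have hslice : ContDiff ℝ (n + 1)
      (Function.uncurry fun (p : (Fin χ → ℝ) × (Fin χ → ℝ)) l => F l p.2) :=
    hF.comp (contDiff_snd.prodMk (contDiff_snd.comp contDiff_fst))
  exact hslice.fderiv_apply contDiff_fst contDiff_const le_rfl

theorem contDiff_uncurry_pderivAff (hF : ContDiff ℝ (n + 1) (Function.uncurry F)) (i : Fin χ) :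
    ContDiff ℝ n (Function.uncurry (pderivAff i F)) := by
  have hslice : ContDiff ℝ (n + 1)
      (Function.uncurry fun (p : (Fin χ → ℝ) × (Fin χ → ℝ)) a => F p.1 a) :=
    hF.comp ((contDiff_fst.comp contDiff_fst).prodMk contDiff_snd)
  exact hslice.fderiv_apply contDiff_snd contDiff_const le_rfl

theorem contDiff_uncurry_foldr_pderivLam {α : List (Fin χ)}
    (hF : ContDiff ℝ (n + α.length) (Function.uncurry F)) :
    ContDiff ℝ n (Function.uncurry (α.foldr pderivLam F)) := by
  induction α generalizing n with
  | nil => simpa using hF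
  | cons i α ih =>
    refine contDiff_uncurry_pderivLam (ih ?_) i
    simpa [add_assoc, add_comm (1 : WithTop ℕ∞)] using hF

theorem pderivLam_add (hF : Differentiable ℝ (Function.uncurry F))
    (hG : Differentiable ℝ (Function.uncurry G)) (i : Fin χ) :
    pderivLam i (F + G) = pderivLam i F + pderivLam i G := by
  ext l a
  have hFa : DifferentiableAt ℝ (fun l' => F l' a) l := by fun_prop
  have hGa : DifferentiableAt ℝ (fun l' => G l' a) l := by fun_prop
  exact congr($(fderiv_add hFa hGa) (Pi.single i 1))

theorem foldr_pderivLam_add {α : List (Fin χ)}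
    (hF : ContDiff ℝ α.length (Function.uncurry F))
    (hG : ContDiff ℝ α.length (Function.uncurry G)) :
    α.foldr pderivLam (F + G) = α.foldr pderivLam F + α.foldr pderivLam G := by
  induction α with
  | nil => rfl
  | cons i α ih =>
    have differentiable_foldr {H : (Fin χ → ℝ) → (Fin χ → ℝ) → ℝ}
        (hH : ContDiff ℝ (i :: α).length (Function.uncurry H)) :
        Differentiable ℝ (Function.uncurry (α.foldr pderivLam H)) := by
      refine (contDiff_uncurry_foldr_pderivLam (n := 1) ?_).differentiable one_ne_zero
      simpa [add_comm] using hH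
    have hle : ((α.length : ℕ) : WithTop ℕ∞) ≤ (i :: α).length := by simp
    rw [List.foldr_cons, ih (hF.of_le hle) (hG.of_le hle),
      pderivLam_add (differentiable_foldr hF) (differentiable_foldr hG)]
    rfl

theorem pderivLam_const_smul (c : ℝ) (i : Fin χ) : pderivLam i (c • F) = c • pderivLam i F := by
  ext l a
  exact congr($(fderiv_const_smul_field c (f := fun l' => F l' a)) l (Pi.single i 1))

/-- The change of variables `(λ, A) ↦ (A - λ, A)` of the fluctuation relation, acting on
functions of `(λ, A)`. -/
def reflectLam (F : (Fin χ → ℝ) → (Fin χ → ℝ) → ℝ) : (Fin χ → ℝ) → (Fin χ → ℝ) → ℝ :=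
  fun l a => F (a - l) a

theorem pderivLam_reflectLam (i : Fin χ) :
    pderivLam i (reflectLam F) = -reflectLam (pderivLam i F) := by
  ext l a
  have hfderiv : fderiv ℝ (fun l' => F (a - l') a) l = -fderiv ℝ (fun v => F v a) (a - l) := by
    have hneg := (ContinuousLinearEquiv.neg ℝ (M := Fin χ → ℝ)).comp_right_fderiv
      (f := fun v => F (a + v) a) (x := l)
    have hshift := fderiv_comp_add_left (𝕜 := ℝ) (f := fun v => F v a) (x := -l) a
    ext v
    simpa [Function.comp_def, ← sub_eq_add_neg, hshift] using congr($hneg v)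
  exact congr($hfderiv (Pi.single i 1))

theorem foldr_pderivLam_reflectLam (α : List (Fin χ)) :
    α.foldr pderivLam (reflectLam F) =
      (-1 : ℝ) ^ α.length • reflectLam (α.foldr pderivLam F) := by
  induction α with
  | nil => simp
  | cons i α ih =>
    rw [List.foldr_cons, ih, pderivLam_const_smul, pderivLam_reflectLam, List.length_cons,
      pow_succ, mul_neg_one, neg_smul, smul_neg]
    rfl

theorem pderivAff_reflectLam (hF : Differentiable ℝ (Function.uncurry F)) (i : Fin χ) :
    pderivAff i (reflectLam F) = reflectLam (pderivLam i F + pderivAff i F) := by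
  ext l a
  have hcurve : HasFDerivAt (fun a' : Fin χ → ℝ => (a' - l, a')) _ a :=
    ((hasFDerivAt_id (𝕜 := ℝ) a).sub_const l).prodMk (hasFDerivAt_id a)
  have hcomp := (hF (a - l, a)).hasFDerivAt.comp (f := fun a' => (a' - l, a')) a hcurve
  calc pderivAff i (reflectLam F) l a
      = fderiv ℝ (Function.uncurry F) (a - l, a) (Pi.single i 1, Pi.single i 1) :=
        congr($(hcomp.fderiv) (Pi.single i 1))
    _ = reflectLam (pderivLam i F + pderivAff i F) l a := by
        simp only [reflectLam, Pi.add_apply, pderivLam_eq_fderiv_uncurry hF,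
          pderivAff_eq_fderiv_uncurry hF, ← map_add, Prod.mk_add_mk, add_zero, zero_add]

theorem Dmix_singleton_reflectLam {α : List (Fin χ)}
    (hF : ContDiff ℝ (α.length + 1) (Function.uncurry F)) (δ : Fin χ) :
    Dmix α [δ] (reflectLam F) = (-1) ^ α.length * (Dmix (α ++ [δ]) [] F + Dmix α [δ] F) := by
  simp only [Dmix, List.foldr_append, List.foldr_cons, List.foldr_nil]
  rw [pderivAff_reflectLam (hF.differentiable (by simp)), foldr_pderivLam_reflectLam,
    foldr_pderivLam_add (contDiff_uncurry_pderivLam hF δ) (contDiff_uncurry_pderivAff hF δ)]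
  simp [reflectLam]

end

theorem response_third_cumulant_from_fourth_cumulant_general {χ : ℕ}
    (f g : (Fin χ → ℝ) → (Fin χ → ℝ) → ℝ) (α : List (Fin χ)) (δ : Fin χ)
    (hf : ContDiff ℝ (α.length + 1) (Function.uncurry f))
    (hFR : ∀ l A : Fin χ → ℝ, f l A = g (A - l) A) :
    Dmix α [δ] f - (-1) ^ α.length * Dmix α [δ] g = -Dmix (α ++ [δ]) [] f := by
  have hg : g = reflectLam f := by
    ext l A
    simp [reflectLam, hFR]
  have hsign : (-1 : ℝ) ^ α.length * (-1) ^ α.length = 1 := pow_mul_pow_eq_one _ (by norm_num)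
  rw [hg, Dmix_singleton_reflectLam hf, ← mul_assoc, hsign]
  ring

/-- `Q_{αβγ,δ}(B) + Q_{αβγ,δ}(−B) = − Q_{αβγδ}(0; B)`. -/
theorem response_third_cumulant_from_fourth_cumulant {χ : ℕ} (hχ : 1 ≤ χ)
    (f g : (Fin χ → ℝ) → (Fin χ → ℝ) → ℝ)
    (hf : ContDiff ℝ (⊤ : ℕ∞) (Function.uncurry f))
    (hg : ContDiff ℝ (⊤ : ℕ∞) (Function.uncurry g))
    (hFR : ∀ l A : Fin χ → ℝ, f l A = g (A - l) A)
    (α β γ δ : Fin χ) :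
    Dmix [α, β, γ] [δ] f + Dmix [α, β, γ] [δ] g = - Dmix [α, β, γ, δ] [] f := by
  simpa [Odd.neg_one_pow (by decide : Odd 3)] using
    response_third_cumulant_from_fourth_cumulant_general f g [α, β, γ] δ
      (mod_cast contDiff_infty.1 hf 4) hFR
end
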